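/- arXiv:1906.05568 — 2 statements merged into one kernel-verified Lean document; each statement's English description precedes it below -/
import Mathlib

section
/- Let p ∈ (0,1/2] and β > 0. Suppose f ∈ L²({0,1}^n, μ_p) has β-small generalised influences, i.e. I_S(f) ≤ β·𝔼_{μ_p}[f²] for all S ⊆ [n]. Then ‖T_{1/5} f‖₄ ≤ β^{1/4}·‖f‖₂. -/
/-!
Average `(a + ρ t b)² (c + ρ t d)²` over one biased bit with normalised value `t`. By AM-GM and
Cauchy-Schwarz the result is at most `a²c² + 4ρ² (a²d² + b²c²) + 3ρ⁴ 𝔼[t⁴] b²d²`, and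
`𝔼[t⁴] ≤ 1 / σ²`. Iterating over the coordinates gives
`𝔼 (T_ρ f)⁴ ≤ ∑_S (3ρ⁴ / σ²)^|S| ‖T_{2ρ} D_S f‖₂⁴`; the induction closes only for products
`(T_ρ f)² (T_ρ g)²` of two functions, since `a` and `b` become separate functions at each step.
Small generalised influences replace one factor `‖T_{2ρ} D_S f‖₂²` by `β σ^{2|S|} ‖f‖₂²`, and by
the binomial theorem the remaining sum `∑_S (3ρ⁴)^|S| ‖T_{2ρ} D_S f‖₂²` is
`∑_R (4ρ² + 3ρ⁴)^|R| f̂(R)²`, at most `‖f‖₂²` by Bessel.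
-/

open Finset

namespace GlobalHC

variable {n : ℕ}

/-- Expectation with respect to the `p`-biased measure on `{0,1}^n`. -/
noncomputable def Ep (p : ℝ) (f : (Fin n → Bool) → ℝ) : ℝ :=
  ∑ x : Fin n → Bool, (∏ i, if x i then p else 1 - p) * f x

/-- The `r`-norm with respect to the `p`-biased measure. -/
noncomputable def pnorm (p r : ℝ) (f : (Fin n → Bool) → ℝ) : ℝ :=
  (Ep p fun x => |f x| ^ r) ^ (1 / r)

/-- The `p`-biased character `χ_S`. -/
noncomputable def chi (p : ℝ) (S : Finset (Fin n)) (x : Fin n → Bool) : ℝ :=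
  ∏ i ∈ S, ((if x i then (1 : ℝ) else 0) - p) / Real.sqrt (p * (1 - p))

/-- The `p`-biased Fourier coefficient `f̂(S)`. -/
noncomputable def coeff (p : ℝ) (f : (Fin n → Bool) → ℝ) (S : Finset (Fin n)) : ℝ :=
  Ep p fun x => f x * chi p S x

/-- The derivative `D_S f = Σ_{T ⊇ S} f̂(T) χ_{T∖S}`. -/
noncomputable def derivS (p : ℝ) (S : Finset (Fin n)) (f : (Fin n → Bool) → ℝ) :
    (Fin n → Bool) → ℝ :=
  fun x => ∑ T ∈ Finset.univ.filter (fun T => S ⊆ T), coeff p f T * chi p (T \ S) x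

/-- The generalised influence `I_S(f) = σ^{-2|S|} Σ_{T ⊇ S} f̂(T)²`. -/
noncomputable def genInf (p : ℝ) (S : Finset (Fin n)) (f : (Fin n → Bool) → ℝ) : ℝ :=
  (∑ T ∈ Finset.univ.filter (fun T => S ⊆ T), coeff p f T ^ 2) / (p * (1 - p)) ^ S.card

/-- The noise operator `T_ρ f = Σ_S ρ^{|S|} f̂(S) χ_S`. -/
noncomputable def noise (p ρ : ℝ) (f : (Fin n → Bool) → ℝ) : (Fin n → Bool) → ℝ :=
  fun x => ∑ S : Finset (Fin n), ρ ^ S.card * coeff p f S * chi p S x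

/-- The degree-`r` truncation `f^{≤ r}`. -/
noncomputable def trunc (p : ℝ) (r : ℕ) (f : (Fin n → Bool) → ℝ) : (Fin n → Bool) → ℝ :=
  fun x => ∑ S ∈ Finset.univ.filter (fun S : Finset (Fin n) => S.card ≤ r),
    coeff p f S * chi p S x

/-- The restriction `f_{J→1}` setting all coordinates in `J` to `1`. -/
def restrict1 (J : Finset (Fin n)) (f : (Fin n → Bool) → ℝ) : (Fin n → Bool) → ℝ :=
  fun x => f (fun i => if i ∈ J then true else x i)

/-- `f` is `(r,δ)`-global (for the `p`-biased measure). -/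
def IsGlobal (p r δ : ℝ) (f : (Fin n → Bool) → ℝ) : Prop :=
  ∀ J : Finset (Fin n), (J.card : ℝ) ≤ r → Ep p (restrict1 J f) ≤ Ep p f + δ

/-- The total influence `I[f] = Σ_i Pr_{μ_p}[f(x ⊕ e_i) ≠ f(x)]`. -/
noncomputable def totalInf (p : ℝ) (f : (Fin n → Bool) → ℝ) : ℝ :=
  ∑ i : Fin n, Ep p fun x => if f (Function.update x i (!x i)) = f x then 0 else 1

/-- Noise stability `Stab_ρ(f) = Σ_S ρ^{|S|} f̂(S)²` (w.r.t. `μ_p`). -/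
noncomputable def stab (p ρ : ℝ) (f : (Fin n → Bool) → ℝ) : ℝ :=
  ∑ S : Finset (Fin n), ρ ^ S.card * coeff p f S ^ 2

/-- `f` is monotone. -/
def Mono (f : (Fin n → Bool) → ℝ) : Prop :=
  ∀ x y : Fin n → Bool, (∀ i, x i ≤ y i) → f x ≤ f y

section OneCoordinate

lemma sum_mul_sq_mul_sq_le {ι : Type*} {s : Finset ι} {w t : ι → ℝ} (hw : ∀ i ∈ s, 0 ≤ w i)
    (hsum : ∑ i ∈ s, w i = 1) (hmean : ∑ i ∈ s, w i * t i = 0)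
    (hvar : ∑ i ∈ s, w i * t i ^ 2 = 1) (ρ a b c d : ℝ) :
    ∑ i ∈ s, w i * ((a + ρ * t i * b) ^ 2 * (c + ρ * t i * d) ^ 2) ≤
      a ^ 2 * c ^ 2 + 4 * ρ ^ 2 * (a ^ 2 * d ^ 2 + b ^ 2 * c ^ 2) +
        3 * ρ ^ 4 * (∑ i ∈ s, w i * t i ^ 4) * (b ^ 2 * d ^ 2) := by
  set m₃ := ∑ i ∈ s, w i * t i ^ 3 with hm₃
  set m₄ := ∑ i ∈ s, w i * t i ^ 4 with hm₄
  have expand : ∑ i ∈ s, w i * ((a + ρ * t i * b) ^ 2 * (c + ρ * t i * d) ^ 2) =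
      a ^ 2 * c ^ 2 + ρ ^ 2 * (a ^ 2 * d ^ 2 + b ^ 2 * c ^ 2 + 4 * (a * d) * (b * c)) +
        2 * ρ ^ 3 * m₃ * ((a * d + b * c) * (b * d)) + ρ ^ 4 * m₄ * (b ^ 2 * d ^ 2) := by
    calc
      _ = a ^ 2 * c ^ 2 * ∑ i ∈ s, w i +
          2 * ρ * (a * b * c ^ 2 + a ^ 2 * c * d) * ∑ i ∈ s, w i * t i +
          ρ ^ 2 * (a ^ 2 * d ^ 2 + b ^ 2 * c ^ 2 + 4 * (a * d) * (b * c)) *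
            ∑ i ∈ s, w i * t i ^ 2 +
          2 * ρ ^ 3 * ((a * d + b * c) * (b * d)) * m₃ + ρ ^ 4 * (b ^ 2 * d ^ 2) * m₄ := by
        simp only [hm₃, hm₄, mul_sum, ← sum_add_distrib]
        exact sum_congr rfl fun i _ => by ring
      _ = _ := by rw [hsum, hmean, hvar]; ring
  have third_sq_le : m₃ ^ 2 ≤ m₄ := by
    rw [← one_mul m₄, ← hvar]
    exact sum_sq_le_sum_mul_sum_of_sq_le_mul s
      (fun i hi => mul_nonneg (hw i hi) (sq_nonneg _))
      (fun i hi => mul_nonneg (hw i hi) (by positivity)) (fun i _ => by linarith)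
  have cross : 0 ≤ ρ ^ 2 * (a * d - b * c) ^ 2 := by positivity
  have skew_left : 0 ≤ (ρ * (a * d) - ρ ^ 2 * m₃ * (b * d)) ^ 2 := sq_nonneg _
  have skew_right : 0 ≤ (ρ * (b * c) - ρ ^ 2 * m₃ * (b * d)) ^ 2 := sq_nonneg _
  have kurtosis : ρ ^ 4 * (b * d) ^ 2 * m₃ ^ 2 ≤ ρ ^ 4 * (b * d) ^ 2 * m₄ :=
    mul_le_mul_of_nonneg_left third_sq_le (by positivity)
  rw [expand]
  linarith

/-- The probability that a `p`-biased bit equals `b`. -/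
def bitWeight (p : ℝ) (b : Bool) : ℝ := if b then p else 1 - p

/-- The normalised value `(b - p) / σ` of a bit, i.e. the one-coordinate character. -/
noncomputable def bitChar (p : ℝ) (b : Bool) : ℝ :=
  ((if b then (1 : ℝ) else 0) - p) / √(p * (1 - p))

variable {p : ℝ}

lemma bitWeight_nonneg (hp0 : 0 ≤ p) (hp1 : p ≤ 1) (b : Bool) : 0 ≤ bitWeight p b := by
  cases b <;> simp [bitWeight, hp0, hp1]

lemma sum_bitWeight (p : ℝ) : ∑ b, bitWeight p b = 1 := by
  simp [bitWeight]

lemma sum_bitWeight_mul_bitChar (p : ℝ) : ∑ b, bitWeight p b * bitChar p b = 0 := by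
  simp only [bitWeight, bitChar, Fintype.sum_bool, if_true, Bool.false_eq_true, if_false]
  ring

lemma sum_bitWeight_mul_bitChar_sq (hp0 : 0 < p) (hp1 : p < 1) :
    ∑ b, bitWeight p b * bitChar p b ^ 2 = 1 := by
  have hσ : 0 < p * (1 - p) := mul_pos hp0 (sub_pos.2 hp1)
  have hq : 1 - p ≠ 0 := (sub_pos.2 hp1).ne'
  simp only [bitWeight, bitChar, Fintype.sum_bool, if_true, Bool.false_eq_true, if_false,
    div_pow, Real.sq_sqrt hσ.le]
  field_simp
  ring

lemma sum_bitWeight_mul_bitChar_pow_four (hp0 : 0 < p) (hp1 : p < 1) :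
    ∑ b, bitWeight p b * bitChar p b ^ 4 = 1 / (p * (1 - p)) - 3 := by
  have hσ : 0 < p * (1 - p) := mul_pos hp0 (sub_pos.2 hp1)
  have hq : 1 - p ≠ 0 := (sub_pos.2 hp1).ne'
  have sqrt_pow_four : √(p * (1 - p)) ^ 4 = (p * (1 - p)) ^ 2 := by
    rw [← Real.sq_sqrt hσ.le, ← pow_mul, Real.sq_sqrt hσ.le]
  simp only [bitWeight, bitChar, Fintype.sum_bool, if_true, Bool.false_eq_true, if_false,
    div_pow, sqrt_pow_four]
  field_simp
  ring

lemma sum_bitWeight_mul_sq_mul_sq_le (hp0 : 0 < p) (hp1 : p < 1) (ρ a b c d : ℝ) :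
    ∑ u, bitWeight p u * ((a + ρ * bitChar p u * b) ^ 2 * (c + ρ * bitChar p u * d) ^ 2) ≤
      a ^ 2 * c ^ 2 + 4 * ρ ^ 2 * (a ^ 2 * d ^ 2 + b ^ 2 * c ^ 2) +
        3 * ρ ^ 4 / (p * (1 - p)) * (b ^ 2 * d ^ 2) := by
  refine (sum_mul_sq_mul_sq_le (fun u _ => bitWeight_nonneg hp0.le hp1.le u) (sum_bitWeight p)
    (sum_bitWeight_mul_bitChar p) (sum_bitWeight_mul_bitChar_sq hp0 hp1) ρ a b c d).trans ?_
  rw [sum_bitWeight_mul_bitChar_pow_four hp0 hp1, ← mul_one_div (3 * ρ ^ 4)]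
  gcongr
  norm_num

end OneCoordinate

section Expectation

variable {p : ℝ}

lemma Ep_eq_sum_bitWeight (p : ℝ) (f : (Fin n → Bool) → ℝ) :
    Ep p f = ∑ x, (∏ i, bitWeight p (x i)) * f x := rfl

lemma Ep_mono (hp0 : 0 ≤ p) (hp1 : p ≤ 1) {f g : (Fin n → Bool) → ℝ} (h : ∀ x, f x ≤ g x) :
    Ep p f ≤ Ep p g :=
  sum_le_sum fun x _ => mul_le_mul_of_nonneg_left (h x) <|
    prod_nonneg fun i _ => bitWeight_nonneg hp0 hp1 (x i)

lemma Ep_nonneg (hp0 : 0 ≤ p) (hp1 : p ≤ 1) {f : (Fin n → Bool) → ℝ} (h : ∀ x, 0 ≤ f x) :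
    0 ≤ Ep p f :=
  sum_nonneg fun x _ => mul_nonneg (prod_nonneg fun i _ => bitWeight_nonneg hp0 hp1 (x i)) (h x)

lemma Ep_add (p : ℝ) (f g : (Fin n → Bool) → ℝ) :
    Ep p (fun x => f x + g x) = Ep p f + Ep p g := by
  simp only [Ep, mul_add, sum_add_distrib]

lemma Ep_const_mul (p c : ℝ) (f : (Fin n → Bool) → ℝ) :
    Ep p (fun x => c * f x) = c * Ep p f := by
  simp only [Ep, mul_sum, mul_left_comm]

lemma Ep_sum (p : ℝ) {ι : Type*} (s : Finset ι) (f : ι → (Fin n → Bool) → ℝ) :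
    Ep p (fun x => ∑ j ∈ s, f j x) = ∑ j ∈ s, Ep p (f j) := by
  simp only [Ep, mul_sum]
  exact sum_comm

lemma Ep_prod (p : ℝ) (g : Fin n → Bool → ℝ) :
    Ep p (fun x => ∏ i, g i (x i)) = ∏ i, ∑ b, bitWeight p b * g i b := by
  simp only [Ep_eq_sum_bitWeight, ← prod_mul_distrib, Fintype.prod_sum]

lemma Ep_const (p c : ℝ) : Ep p (fun _ : Fin n → Bool => c) = c := by
  have total : Ep p (fun _ : Fin n → Bool => 1) = 1 := by
    simpa only [prod_const_one, mul_one, sum_bitWeight] using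
      Ep_prod p fun (_ : Fin n) _ => (1 : ℝ)
  simpa only [mul_one, total] using Ep_const_mul p c fun _ : Fin n → Bool => 1

lemma Ep_eq_Ep_sum_update (p : ℝ) (i : Fin n) (f : (Fin n → Bool) → ℝ) :
    Ep p f = Ep p fun x => ∑ b, bitWeight p b * f (Function.update x i b) := by
  let e := (Equiv.funSplitAt i Bool).symm
  have split (g : (Fin n → Bool) → ℝ) : Ep p g =
      ∑ y, (∏ j, bitWeight p (y j)) * ∑ b, bitWeight p b * g (e (b, y)) := by
    rw [Ep_eq_sum_bitWeight, ← e.sum_comp, Fintype.sum_prod_type_right]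
    refine sum_congr rfl fun y _ => ?_
    rw [mul_sum]
    refine sum_congr rfl fun b _ => ?_
    rw [Fintype.prod_eq_mul_prod_subtype_ne _ i]
    have others (j : {j // j ≠ i}) : e (b, y) j = y j := by simp [e, j.2]
    have self : e (b, y) i = b := by simp [e]
    simp only [others, self]
    ring
  have update_split (b c : Bool) (y) : Function.update (e (c, y)) i b = e (b, y) := by
    funext j
    by_cases hj : j = i
    · subst hj; simp [e]
    · simp [e, hj]
  simp only [split, update_split, ← sum_mul, sum_bitWeight, one_mul]

end Expectation

section Characters

variable {p : ℝ}

lemma chi_eq_prod_bitChar (p : ℝ) (S : Finset (Fin n)) (x : Fin n → Bool) :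
    chi p S x = ∏ i ∈ S, bitChar p (x i) := rfl

lemma chi_update_of_notMem (p : ℝ) {i : Fin n} {S : Finset (Fin n)} (hi : i ∉ S)
    (x : Fin n → Bool) (b : Bool) : chi p S (Function.update x i b) = chi p S x :=
  prod_congr rfl fun j hj => by rw [Function.update_of_ne (ne_of_mem_of_not_mem hj hi)]

lemma chi_insert (p : ℝ) {i : Fin n} {S : Finset (Fin n)} (hi : i ∉ S) (x : Fin n → Bool) :
    chi p (insert i S) x = bitChar p (x i) * chi p S x :=
  prod_insert hi

lemma Ep_chi_mul_chi (hp0 : 0 < p) (hp1 : p < 1) (S T : Finset (Fin n)) :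
    Ep p (fun x => chi p S x * chi p T x) = if S = T then 1 else 0 := by
  have factor : ∀ i, ∑ b, bitWeight p b *
      ((if i ∈ S then bitChar p b else 1) * if i ∈ T then bitChar p b else 1) =
      if i ∈ S ↔ i ∈ T then 1 else 0 := by
    intro i
    by_cases hS : i ∈ S <;> by_cases hT : i ∈ T <;>
      simp only [hS, hT, if_true, if_false, mul_one, one_mul, iff_false, not_true, iff_true,
        ← sq, one_pow, sum_bitWeight, sum_bitWeight_mul_bitChar,
        sum_bitWeight_mul_bitChar_sq hp0 hp1]
  calc
    _ = Ep p fun x => ∏ i, (if i ∈ S then bitChar p (x i) else 1) *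
          if i ∈ T then bitChar p (x i) else 1 := by
      simp only [chi_eq_prod_bitChar, prod_mul_distrib, Fintype.prod_ite_mem]
    _ = ∏ i, if i ∈ S ↔ i ∈ T then 1 else 0 := by
      rw [Ep_prod p fun i b => (if i ∈ S then bitChar p b else 1) *
        if i ∈ T then bitChar p b else 1]
      exact prod_congr rfl fun i _ => factor i
    _ = _ := by
      rw [Fintype.prod_boole]
      simp only [Finset.ext_iff]
      congr

lemma Ep_mul_sum_chi (p : ℝ) (f : (Fin n → Bool) → ℝ) (a : Finset (Fin n) → ℝ) :
    Ep p (fun x => f x * ∑ S, a S * chi p S x) = ∑ S, a S * coeff p f S := by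
  simp only [mul_sum, mul_left_comm (f _), Ep_sum, Ep_const_mul, coeff]

lemma coeff_sum_chi (hp0 : 0 < p) (hp1 : p < 1) (a : Finset (Fin n) → ℝ) (S : Finset (Fin n)) :
    coeff p (fun x => ∑ T, a T * chi p T x) S = a S := by
  simp only [coeff, sum_mul, mul_assoc, Ep_sum, Ep_const_mul, Ep_chi_mul_chi hp0 hp1, mul_ite,
    mul_one, mul_zero, sum_ite_eq', mem_univ, if_true]

lemma sum_coeff_sq_le (hp0 : 0 < p) (hp1 : p < 1) (f : (Fin n → Bool) → ℝ) :
    ∑ S, coeff p f S ^ 2 ≤ Ep p fun x => f x ^ 2 := by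
  set g : (Fin n → Bool) → ℝ := fun x => ∑ S, coeff p f S * chi p S x with hg
  have cross : Ep p (fun x => f x * g x) = ∑ S, coeff p f S ^ 2 := by
    simp only [hg, Ep_mul_sum_chi, sq]
  have square : Ep p (fun x => g x * g x) = ∑ S, coeff p f S ^ 2 := by
    rw [Ep_mul_sum_chi p g]
    simp only [hg, coeff_sum_chi hp0 hp1, sq]
  have expand : Ep p (fun x => (f x - g x) ^ 2) =
      Ep p (fun x => f x ^ 2) + -2 * Ep p (fun x => f x * g x) + Ep p (fun x => g x * g x) := by
    simp only [← Ep_const_mul, ← Ep_add]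
    congr 1 with x
    ring
  have nonneg : 0 ≤ Ep p fun x => (f x - g x) ^ 2 :=
    Ep_nonneg hp0.le hp1.le fun x => sq_nonneg _
  linarith

end Characters

section DerivEnergy

variable {ι : Type*} [DecidableEq ι]

/-- `∑_{S ⊆ R ⊆ U} τ^|R ∖ S| a_R²`, which is `‖T_{√τ} D_S g‖₂²` for the polynomial
`g = ∑_{R ⊆ U} a_R χ_R`. It is indexed by `U` so that coordinates can be added one at a time. -/
def derivEnergy (τ : ℝ) (U : Finset ι) (a : Finset ι → ℝ) (S : Finset ι) : ℝ :=
  ∑ R ∈ U.powerset with S ⊆ R, τ ^ #(R \ S) * a R ^ 2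

variable {τ : ℝ} {i : ι} {U S : Finset ι}

lemma derivEnergy_nonneg (hτ : 0 ≤ τ) (U : Finset ι) (a : Finset ι → ℝ) (S : Finset ι) :
    0 ≤ derivEnergy τ U a S :=
  sum_nonneg fun _ _ => by positivity

lemma derivEnergy_insert_of_notMem (τ : ℝ) (hU : i ∉ U) (hS : i ∉ S) (a : Finset ι → ℝ) :
    derivEnergy τ (insert i U) a S =
      derivEnergy τ U a S + τ * derivEnergy τ U (a ∘ insert i) S := by
  simp only [derivEnergy, sum_filter]
  rw [sum_powerset_insert hU, mul_sum]
  congr 1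
  refine sum_congr rfl fun R hR => ?_
  have hiR : i ∉ R := notMem_mono (mem_powerset.1 hR) hU
  simp only [subset_insert_iff_of_notMem hS]
  rw [insert_sdiff_of_notMem _ hS,
    card_insert_of_notMem (fun h => hiR (mem_sdiff.1 h).1), mul_ite, mul_zero, pow_succ',
    mul_assoc, Function.comp_apply]

lemma derivEnergy_insert_insert (τ : ℝ) (hU : i ∉ U) (hS : i ∉ S) (a : Finset ι → ℝ) :
    derivEnergy τ (insert i U) a (insert i S) = derivEnergy τ U (a ∘ insert i) S := by
  simp only [derivEnergy, sum_filter]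
  rw [sum_powerset_insert hU, ← sum_add_distrib]
  refine sum_congr rfl fun R hR => ?_
  have hiR : i ∉ R := notMem_mono (mem_powerset.1 hR) hU
  have not_subset : ¬insert i S ⊆ R := fun h => hiR (h (mem_insert_self i S))
  simp only [insert_subset_insert_iff hS]
  rw [if_neg not_subset, zero_add, insert_sdiff_insert, sdiff_insert_of_notMem hiR,
    Function.comp_apply]

lemma sum_pow_mul_derivEnergy (η τ : ℝ) (U : Finset ι) (a : Finset ι → ℝ) :
    ∑ S ∈ U.powerset, η ^ #S * derivEnergy τ U a S =
      ∑ R ∈ U.powerset, (η + τ) ^ #R * a R ^ 2 := by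
  simp only [derivEnergy, mul_sum]
  rw [sum_comm' (s' := powerset) (t' := U.powerset) (by grind)]
  refine sum_congr rfl fun R _ => ?_
  rw [← sum_pow_mul_eq_add_pow, sum_mul]
  refine sum_congr rfl fun S hS => ?_
  rw [card_sdiff_of_subset (mem_powerset.1 hS), mul_assoc]

lemma sum_pow_mul_derivEnergy_le {η : ℝ} (hη : 0 ≤ η) (hτ : 0 ≤ τ) (h : η + τ ≤ 1)
    (U : Finset ι) (a : Finset ι → ℝ) :
    ∑ S ∈ U.powerset, η ^ #S * derivEnergy τ U a S ≤ ∑ R ∈ U.powerset, a R ^ 2 := by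
  rw [sum_pow_mul_derivEnergy]
  exact sum_le_sum fun R _ => mul_le_of_le_one_left (sq_nonneg _) (pow_le_one₀ (by positivity) h)

lemma derivEnergy_mul_derivEnergy_insert_ge (hτ : 0 ≤ τ) (hU : i ∉ U) (hS : i ∉ S)
    (a b : Finset ι → ℝ) :
    derivEnergy τ U a S * derivEnergy τ U b S +
        τ * (derivEnergy τ U a S * derivEnergy τ U (b ∘ insert i) S +
          derivEnergy τ U (a ∘ insert i) S * derivEnergy τ U b S) ≤
      derivEnergy τ (insert i U) a S * derivEnergy τ (insert i U) b S := by
  rw [derivEnergy_insert_of_notMem τ hU hS, derivEnergy_insert_of_notMem τ hU hS]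
  have := mul_nonneg (mul_nonneg hτ (derivEnergy_nonneg hτ U (a ∘ insert i) S))
    (mul_nonneg hτ (derivEnergy_nonneg hτ U (b ∘ insert i) S))
  linarith

end DerivEnergy

section NoisePolynomial

variable {p : ℝ} {i : Fin n} {U : Finset (Fin n)}

/-- The polynomial `T_ρ (∑_{S ⊆ U} a_S χ_S)` in the coordinates from `U`. -/
noncomputable def noisePoly (p ρ : ℝ) (U : Finset (Fin n)) (a : Finset (Fin n) → ℝ)
    (x : Fin n → Bool) : ℝ :=
  ∑ S ∈ U.powerset, ρ ^ #S * a S * chi p S x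

lemma noise_eq_noisePoly (p ρ : ℝ) (f : (Fin n → Bool) → ℝ) :
    noise p ρ f = noisePoly p ρ univ (coeff p f) := by
  funext x
  simp only [noise, noisePoly, powerset_univ]

lemma noisePoly_empty (p ρ : ℝ) (a : Finset (Fin n) → ℝ) (x : Fin n → Bool) :
    noisePoly p ρ ∅ a x = a ∅ := by
  simp [noisePoly, chi]

lemma noisePoly_insert_update (p ρ : ℝ) (hi : i ∉ U) (a : Finset (Fin n) → ℝ)
    (x : Fin n → Bool) (b : Bool) :
    noisePoly p ρ (insert i U) a (Function.update x i b) =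
      noisePoly p ρ U a x + ρ * bitChar p b * noisePoly p ρ U (a ∘ insert i) x := by
  unfold noisePoly
  rw [sum_powerset_insert hi, mul_sum]
  congr 1 <;> refine sum_congr rfl fun S hS => ?_
  all_goals have hiS : i ∉ S := notMem_mono (mem_powerset.1 hS) hi
  · rw [chi_update_of_notMem p hiS]
  · rw [chi_insert p hiS, chi_update_of_notMem p hiS, Function.update_self,
      card_insert_of_notMem hiS, Function.comp_apply]
    ring

lemma Ep_noisePoly_insert_sq_mul_sq_le (hp0 : 0 < p) (hp1 : p < 1) (ρ : ℝ) (hi : i ∉ U)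
    (a b : Finset (Fin n) → ℝ) :
    Ep p (fun x => noisePoly p ρ (insert i U) a x ^ 2 * noisePoly p ρ (insert i U) b x ^ 2) ≤
      Ep p (fun x => noisePoly p ρ U a x ^ 2 * noisePoly p ρ U b x ^ 2) +
        4 * ρ ^ 2 *
          (Ep p (fun x => noisePoly p ρ U a x ^ 2 * noisePoly p ρ U (b ∘ insert i) x ^ 2) +
            Ep p (fun x => noisePoly p ρ U (a ∘ insert i) x ^ 2 * noisePoly p ρ U b x ^ 2)) +
        3 * ρ ^ 4 / (p * (1 - p)) *
          Ep p (fun x =>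
            noisePoly p ρ U (a ∘ insert i) x ^ 2 * noisePoly p ρ U (b ∘ insert i) x ^ 2) := by
  rw [Ep_eq_Ep_sum_update p i]
  simp only [← Ep_const_mul, ← Ep_add, noisePoly_insert_update p ρ hi]
  exact Ep_mono hp0.le hp1.le fun x => sum_bitWeight_mul_sq_mul_sq_le hp0 hp1 _ _ _ _ _

theorem Ep_noisePoly_sq_mul_sq_le (hp0 : 0 < p) (hp1 : p < 1) (ρ : ℝ) (U : Finset (Fin n))
    (a b : Finset (Fin n) → ℝ) :
    Ep p (fun x => noisePoly p ρ U a x ^ 2 * noisePoly p ρ U b x ^ 2) ≤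
      ∑ S ∈ U.powerset, (3 * ρ ^ 4 / (p * (1 - p))) ^ #S *
        (derivEnergy (4 * ρ ^ 2) U a S * derivEnergy (4 * ρ ^ 2) U b S) := by
  have hK : 0 ≤ 3 * ρ ^ 4 / (p * (1 - p)) :=
    div_nonneg (by positivity) (mul_pos hp0 (sub_pos.2 hp1)).le
  induction U using Finset.induction_on generalizing a b with
  | empty => simp [noisePoly_empty, Ep_const, derivEnergy]
  | insert i U hi ih =>
    set K := 3 * ρ ^ 4 / (p * (1 - p))
    set Q := derivEnergy (4 * ρ ^ 2) U
    calc
      _ ≤ ∑ S ∈ U.powerset, K ^ #S * (Q a S * Q b S) +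
          4 * ρ ^ 2 * (∑ S ∈ U.powerset, K ^ #S * (Q a S * Q (b ∘ insert i) S) +
            ∑ S ∈ U.powerset, K ^ #S * (Q (a ∘ insert i) S * Q b S)) +
          K * ∑ S ∈ U.powerset, K ^ #S * (Q (a ∘ insert i) S * Q (b ∘ insert i) S) := by
        refine (Ep_noisePoly_insert_sq_mul_sq_le hp0 hp1 ρ hi a b).trans ?_
        gcongr <;> apply ih
      _ = ∑ S ∈ U.powerset, K ^ #S * (Q a S * Q b S +
            4 * ρ ^ 2 * (Q a S * Q (b ∘ insert i) S + Q (a ∘ insert i) S * Q b S)) +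
          ∑ S ∈ U.powerset, K ^ (#S + 1) * (Q (a ∘ insert i) S * Q (b ∘ insert i) S) := by
        simp only [mul_sum, ← sum_add_distrib]
        exact sum_congr rfl fun S _ => by ring
      _ ≤ _ := by
        rw [sum_powerset_insert hi]
        refine add_le_add (sum_le_sum fun S hS => ?_) (sum_le_sum fun S hS => ?_) <;>
          have hiS : i ∉ S := notMem_mono (mem_powerset.1 hS) hi
        · exact mul_le_mul_of_nonneg_left
            (derivEnergy_mul_derivEnergy_insert_ge (by positivity) hi hiS a b) (by positivity)
        · rw [derivEnergy_insert_insert _ hi hiS, derivEnergy_insert_insert _ hi hiS,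
            card_insert_of_notMem hiS]

end NoisePolynomial

section Hypercontractivity

variable {p ρ β : ℝ}

lemma genInf_nonneg (hp0 : 0 ≤ p) (hp1 : p ≤ 1) (S : Finset (Fin n)) (f : (Fin n → Bool) → ℝ) :
    0 ≤ genInf p S f :=
  div_nonneg (sum_nonneg fun _ _ => sq_nonneg _)
    (pow_nonneg (mul_nonneg hp0 (sub_nonneg.2 hp1)) _)

lemma derivEnergy_coeff_le_genInf (hp0 : 0 < p) (hp1 : p < 1) {τ : ℝ} (hτ0 : 0 ≤ τ)
    (hτ1 : τ ≤ 1) (f : (Fin n → Bool) → ℝ) (S : Finset (Fin n)) :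
    derivEnergy τ univ (coeff p f) S ≤ genInf p S f * (p * (1 - p)) ^ #S := by
  have hσ : 0 < p * (1 - p) := mul_pos hp0 (sub_pos.2 hp1)
  rw [genInf, div_mul_cancel₀ _ (pow_pos hσ _).ne', derivEnergy, powerset_univ]
  exact sum_le_sum fun R _ => mul_le_of_le_one_left (sq_nonneg _) (pow_le_one₀ hτ0 hτ1)

theorem Ep_noise_pow_four_le_sum_derivEnergy (hp0 : 0 < p) (hp1 : p < 1) (ρ : ℝ)
    (f : (Fin n → Bool) → ℝ) :
    Ep p (fun x => noise p ρ f x ^ 4) ≤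
      ∑ S, (3 * ρ ^ 4 / (p * (1 - p))) ^ #S * derivEnergy (4 * ρ ^ 2) univ (coeff p f) S ^ 2 := by
  simpa only [← noise_eq_noisePoly, ← pow_add, Nat.reduceAdd, sq (derivEnergy _ _ _ _),
    powerset_univ] using
    Ep_noisePoly_sq_mul_sq_le hp0 hp1 ρ univ (coeff p f) (coeff p f)

theorem Ep_noise_pow_four_le (hp0 : 0 < p) (hp1 : p < 1) (hρ : 4 * ρ ^ 2 + 3 * ρ ^ 4 ≤ 1)
    {f : (Fin n → Bool) → ℝ} (hf : ∀ S, genInf p S f ≤ β * Ep p fun x => f x ^ 2) :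
    Ep p (fun x => noise p ρ f x ^ 4) ≤ β * Ep p (fun x => f x ^ 2) ^ 2 := by
  have hσ : 0 < p * (1 - p) := mul_pos hp0 (sub_pos.2 hp1)
  have hτ0 : 0 ≤ 4 * ρ ^ 2 := by positivity
  have hτ1 : 4 * ρ ^ 2 ≤ 1 := by linarith [show 0 ≤ ρ ^ 4 by positivity]
  set N := Ep p fun x => f x ^ 2
  set Q := derivEnergy (4 * ρ ^ 2) univ (coeff p f)
  have hβN : 0 ≤ β * N := (genInf_nonneg hp0.le hp1.le ∅ f).trans (hf ∅)
  have influence (S) : Q S ≤ β * N * (p * (1 - p)) ^ #S :=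
    (derivEnergy_coeff_le_genInf hp0 hp1 hτ0 hτ1 f S).trans <| by gcongr; exact hf S
  have total : ∑ S, (3 * ρ ^ 4) ^ #S * Q S ≤ N := by
    have := sum_pow_mul_derivEnergy_le (η := 3 * ρ ^ 4) (by positivity) hτ0 (by linarith)
      univ (coeff p f)
    rw [powerset_univ] at this
    exact this.trans (sum_coeff_sq_le hp0 hp1 f)
  calc
    _ ≤ ∑ S, (3 * ρ ^ 4 / (p * (1 - p))) ^ #S * Q S ^ 2 :=
      Ep_noise_pow_four_le_sum_derivEnergy hp0 hp1 ρ f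
    _ ≤ ∑ S, (3 * ρ ^ 4 / (p * (1 - p))) ^ #S * (β * N * (p * (1 - p)) ^ #S * Q S) := by
      gcongr with S
      rw [sq]
      exact mul_le_mul_of_nonneg_right (influence S) (derivEnergy_nonneg hτ0 _ _ S)
    _ = β * N * ∑ S, (3 * ρ ^ 4) ^ #S * Q S := by
      rw [mul_sum]
      refine sum_congr rfl fun S _ => ?_
      rw [div_pow]
      field_simp
    _ ≤ β * N * N := mul_le_mul_of_nonneg_left total hβN
    _ = _ := by ring

lemma pnorm_natCast_of_even {k : ℕ} (hk : Even k) (p : ℝ) (f : (Fin n → Bool) → ℝ) :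
    pnorm p k f = Ep p (fun x => f x ^ k) ^ (1 / (k : ℝ)) := by
  simp only [pnorm, Real.rpow_natCast, hk.pow_abs]

theorem statement0_general (hp0 : 0 < p) (hp1 : p < 1) (hρ : 4 * ρ ^ 2 + 3 * ρ ^ 4 ≤ 1)
    (hβ : 0 ≤ β) {f : (Fin n → Bool) → ℝ}
    (hf : ∀ S, genInf p S f ≤ β * Ep p fun x => f x ^ 2) :
    pnorm p 4 (noise p ρ f) ≤ β ^ ((1 : ℝ) / 4) * pnorm p 2 f := by
  have norm_four := pnorm_natCast_of_even (by decide : Even 4) p (noise p ρ f)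
  have norm_two := pnorm_natCast_of_even (by decide : Even 2) p f
  push_cast at norm_four norm_two
  rw [norm_four, norm_two]
  set N := Ep p fun x => f x ^ 2
  have hN : 0 ≤ N := Ep_nonneg hp0.le hp1.le fun x => sq_nonneg _
  calc
    _ ≤ (β * N ^ 2) ^ ((1 : ℝ) / 4) :=
      Real.rpow_le_rpow (Ep_nonneg hp0.le hp1.le fun x => by positivity)
        (Ep_noise_pow_four_le hp0 hp1 hρ hf) (by norm_num)
    _ = _ := by
      rw [Real.mul_rpow hβ (by positivity), ← Real.rpow_natCast, ← Real.rpow_mul hN]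
      norm_num

end Hypercontractivity

/-- hypercontractivity for functions with `β`-small generalised influences. -/
theorem statement0 {n : ℕ} (p β : ℝ) (hp : 0 < p) (hp' : p ≤ 1/2) (hβ : 0 < β)
    (f : (Fin n → Bool) → ℝ)
    (hglob : ∀ S : Finset (Fin n), genInf p S f ≤ β * Ep p (fun x => f x ^ 2)) :
    pnorm p 4 (noise p (1/5) f) ≤ β ^ ((1 : ℝ)/4) * pnorm p 2 f := by
  exact statement0_general hp (by linarith) (by norm_num) hβ.le hglob

end GlobalHC
end

section
/- Let p ∈ (0,1/2], let λ = σ^{−2}((1−p)³ + p³), and let 0 < ρ ≤ 1/√12. Then for every f : {0,1}^n → ℝ, ‖T_ρ f‖₄⁴ ≤ Σ_{S⊆[n]} (3λρ⁴)^{|S|}·‖D_S f‖₂⁴ ≤ Σ_{S⊆[n]} (3σ²ρ⁴)^{|S|}·I_S(f)². -/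
/-!
Write a multilinear polynomial as `u₀ + ζ u₁`, where `u₀` and `u₁` do not involve the coordinate
`ζ`. If `E ζ = 0` and `E ζ² ≤ 1/4`, then the average of `(u₀ + ζ u₁)² (v₀ + ζ v₁)²` over `ζ` is at
most `(u₀² + u₁²) (v₀² + v₁²) + 3 E[ζ⁴] u₁² v₁²`. Every term of this bound is again a product of
squares of two polynomials in fewer variables, so induction on the coordinates bounds `E[P² Q²]`;
working with a pair `P, Q` rather than with `P⁴` is what makes the induction close. The noise
operator replaces `χ_i` by `ζ_i = ρ χ_i`, whose variance `ρ²` is at most `1/4`, and the sums of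
squared coefficients produced by the induction are the `‖D_S f‖₂²` by orthonormality of the
characters.
-/

open Finset

namespace GlobalHC

variable {n : ℕ}

section MultilinearPolynomials

variable {ι : Type*} {Ω : ι → Type*}

/-- The product `∏_{i ∈ S} φ i (x i)` of coordinate functions; for the `p`-biased cube this is
`χ_S`. -/
def character (φ : ∀ i, Ω i → ℝ) (S : Finset ι) (x : ∀ i, Ω i) : ℝ :=
  ∏ i ∈ S, φ i (x i)

/-- The multilinear polynomial `Σ_{S ⊆ A} a S ∏_{i ∈ S} φ i` in the coordinate functions `φ`. The
variable set `A` is explicit so that one can induct on it. -/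
def multilinear (φ : ∀ i, Ω i → ℝ) (A : Finset ι) (a : Finset ι → ℝ) (x : ∀ i, Ω i) : ℝ :=
  ∑ S ∈ A.powerset, a S * character φ S x

variable [DecidableEq ι]

/-- The Fourier weight `Σ_{S ⊆ T ⊆ A} (a T)²` lying above `S`: the squared `2`-norm of the
derivative `D_S` of the multilinear polynomial with coefficients `a` on the subsets of `A`. -/
def upperWeight (A : Finset ι) (a : Finset ι → ℝ) (S : Finset ι) : ℝ :=
  ∑ T ∈ A.powerset with S ⊆ T, a T ^ 2

/-- The right-hand side `Σ_{S ⊆ A} (∏_{i ∈ S} κ i) W_S(a) W_S(b)` of the hypercontractive estimate,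
polarised in the two coefficient families `a` and `b`; `W_S` is `upperWeight`. -/
def weightPairing (κ : ι → ℝ) (A : Finset ι) (a b : Finset ι → ℝ) : ℝ :=
  ∑ S ∈ A.powerset, (∏ i ∈ S, κ i) * (upperWeight A a S * upperWeight A b S)

variable {A : Finset ι} {i : ι}

lemma character_update {φ : ∀ i, Ω i → ℝ} (hi : i ∉ A) (x : ∀ i, Ω i) (ω : Ω i) :
    character φ A (Function.update x i ω) = character φ A x :=
  prod_congr rfl fun j hj => by rw [Function.update_of_ne (ne_of_mem_of_not_mem hj hi)]

lemma character_insert_update {φ : ∀ i, Ω i → ℝ} (hi : i ∉ A) (x : ∀ i, Ω i) (ω : Ω i) :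
    character φ (insert i A) (Function.update x i ω) = φ i ω * character φ A x := by
  rw [← character_update hi x ω, character, prod_insert hi, Function.update_self, character]

lemma multilinear_insert_update {φ : ∀ i, Ω i → ℝ} (hi : i ∉ A) (a : Finset ι → ℝ)
    (x : ∀ i, Ω i) (ω : Ω i) :
    multilinear φ (insert i A) a (Function.update x i ω) =
      multilinear φ A a x + φ i ω * multilinear φ A (fun S => a (insert i S)) x := by
  simp only [multilinear, sum_powerset_insert hi, mul_sum]
  congr 1 <;> refine sum_congr rfl fun S hS => ?_
  · rw [character_update (notMem_of_mem_powerset_of_notMem hS hi)]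
  · rw [character_insert_update (notMem_of_mem_powerset_of_notMem hS hi), mul_left_comm]

lemma upperWeight_insert {S : Finset ι} (hi : i ∉ A) (hS : i ∉ S) (a : Finset ι → ℝ) :
    upperWeight (insert i A) a S =
      upperWeight A a S + upperWeight A (fun T => a (insert i T)) S := by
  simp only [upperWeight, sum_filter, sum_powerset_insert hi, subset_insert_iff_of_notMem hS]

lemma upperWeight_insert_insert {S : Finset ι} (hi : i ∉ A) (hS : i ∉ S) (a : Finset ι → ℝ) :
    upperWeight (insert i A) a (insert i S) = upperWeight A (fun T => a (insert i T)) S := by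
  have hlow : ∀ T ∈ A.powerset, ¬ insert i S ⊆ T := fun T hT hST =>
    notMem_of_mem_powerset_of_notMem hT hi (hST (mem_insert_self i S))
  simp only [upperWeight, sum_filter, sum_powerset_insert hi, insert_subset_insert_iff hS]
  rw [sum_eq_zero fun T hT => if_neg (hlow T hT), zero_add]

lemma weightPairing_insert (κ : ι → ℝ) (hi : i ∉ A) (a b : Finset ι → ℝ) :
    weightPairing κ (insert i A) a b =
      weightPairing κ A a b + weightPairing κ A a (fun S => b (insert i S)) +
        weightPairing κ A (fun S => a (insert i S)) b +
        (1 + κ i) * weightPairing κ A (fun S => a (insert i S)) (fun S => b (insert i S)) := by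
  simp only [weightPairing, sum_powerset_insert hi, mul_sum, ← sum_add_distrib]
  refine sum_congr rfl fun S hS => ?_
  have hiS := notMem_of_mem_powerset_of_notMem hS hi
  rw [upperWeight_insert hi hiS, upperWeight_insert hi hiS, upperWeight_insert_insert hi hiS,
    upperWeight_insert_insert hi hiS, prod_insert hiS]
  ring

end MultilinearPolynomials

section CoordinateExchange

variable {ι : Type*} {Ω : ι → Type*} [DecidableEq ι]

/-- The involution of `(∏ j, Ω j) × Ω i` exchanging the `i`-th coordinate of the point with the
spare element of `Ω i`. -/
def coordSwap (i : ι) : (∀ j, Ω j) × Ω i ≃ (∀ j, Ω j) × Ω i :=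
  Function.Involutive.toPerm (fun z => (Function.update z.1 i z.2, z.1 i)) fun z => by simp

lemma prod_update_mul [Fintype ι] (w : ∀ i, Ω i → ℝ) (i : ι) (x : ∀ i, Ω i) (ω : Ω i) :
    (∏ j, w j (Function.update x i ω j)) * w i (x i) = (∏ j, w j (x j)) * w i ω := by
  simp only [Function.apply_update (fun j => w j), prod_update_of_mem (mem_univ i),
    ← mul_prod_erase univ (fun j => w j (x j)) (mem_univ i), sdiff_singleton_eq_erase]
  ring

end CoordinateExchange

section ProductSpace

variable {ι : Type*} {Ω : ι → Type*} [Fintype ι] [DecidableEq ι]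

lemma character_eq_prod_univ (φ : ∀ i, Ω i → ℝ) (S : Finset ι) (x : ∀ i, Ω i) :
    character φ S x = ∏ i, if i ∈ S then φ i (x i) else 1 := by
  rw [character, prod_ite_mem, univ_inter]

variable [∀ i, Fintype (Ω i)]

/-- The mean of a function on a finite product space whose factor `Ω i` carries the weights `w i`,
as a linear map. The weights are arbitrary reals, not necessarily probabilities. -/
def prodMean (w : ∀ i, Ω i → ℝ) : ((∀ i, Ω i) → ℝ) →ₗ[ℝ] ℝ where
  toFun F := ∑ x, (∏ i, w i (x i)) * F x
  map_add' F G := by simp only [Pi.add_apply, mul_add, sum_add_distrib]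
  map_smul' c F := by
    simp only [Pi.smul_apply, smul_eq_mul, mul_left_comm _ c, ← mul_sum, RingHom.id_apply]

variable {w φ : ∀ i, Ω i → ℝ}

lemma prodMean_apply (w : ∀ i, Ω i → ℝ) (F : (∀ i, Ω i) → ℝ) :
    prodMean w F = ∑ x, (∏ i, w i (x i)) * F x :=
  rfl

lemma prodMean_mono (hw : ∀ i ω, 0 ≤ w i ω) : Monotone (prodMean w) := fun _ _ h =>
  sum_le_sum fun x _ => mul_le_mul_of_nonneg_left (h x) (prod_nonneg fun i _ => hw i (x i))

lemma prodMean_prod (w g : ∀ i, Ω i → ℝ) :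
    prodMean w (fun x => ∏ i, g i (x i)) = ∏ i, ∑ ω, w i ω * g i ω := by
  simp only [prodMean_apply, prod_univ_sum, Fintype.piFinset_univ, prod_mul_distrib]

lemma prodMean_one (hw : ∀ i, ∑ ω, w i ω = 1) : prodMean w 1 = 1 := by
  simpa [hw] using! prodMean_prod w fun _ _ => 1

lemma prodMean_resample {i : ι} (hw : ∑ ω, w i ω = 1) (F : (∀ i, Ω i) → ℝ) :
    prodMean w (fun x => ∑ ω, w i ω * F (Function.update x i ω)) = prodMean w F := by
  calc prodMean w (fun x => ∑ ω, w i ω * F (Function.update x i ω))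
      = ∑ z : (∀ i, Ω i) × Ω i, (∏ j, w j (z.1 j)) * w i z.2 * F (Function.update z.1 i z.2) := by
        simp only [prodMean_apply, Fintype.sum_prod_type, mul_sum, mul_assoc]
    _ = ∑ z : (∀ i, Ω i) × Ω i, (∏ j, w j (z.1 j)) * w i z.2 * F z.1 :=
        Fintype.sum_equiv (coordSwap i) _ _ fun z =>
          congrArg (· * F _) (prod_update_mul w i z.1 z.2).symm
    _ = prodMean w F := by
        simp only [prodMean_apply, Fintype.sum_prod_type, mul_right_comm _ (w i _), ← mul_sum, hw,
          mul_one]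

lemma prodMean_character_mul_character (hw : ∀ i, ∑ ω, w i ω = 1)
    (hmean : ∀ i, ∑ ω, w i ω * φ i ω = 0) (hvar : ∀ i, ∑ ω, w i ω * φ i ω ^ 2 = 1)
    (S T : Finset ι) :
    prodMean w (character φ S * character φ T) = if S = T then 1 else 0 := by
  have hfactor : prodMean w (character φ S * character φ T) =
      ∏ i, ∑ ω, w i ω * ((if i ∈ S then φ i ω else 1) * (if i ∈ T then φ i ω else 1)) := by
    rw [← prodMean_prod]
    simp only [prod_mul_distrib, ← character_eq_prod_univ]
    rfl
  rw [hfactor]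
  split_ifs with hST
  · subst hST
    refine prod_eq_one fun i _ => ?_
    by_cases hi : i ∈ S <;> simp [hi, hw, ← sq, hvar]
  · obtain ⟨i, hi⟩ : ∃ i, ¬ (i ∈ S ↔ i ∈ T) := by simpa [Finset.ext_iff] using hST
    refine prod_eq_zero (mem_univ i) ?_
    by_cases hiS : i ∈ S <;> by_cases hiT : i ∈ T <;> simp_all

lemma prodMean_sum_character_sq (hw : ∀ i, ∑ ω, w i ω = 1)
    (hmean : ∀ i, ∑ ω, w i ω * φ i ω = 0) (hvar : ∀ i, ∑ ω, w i ω * φ i ω ^ 2 = 1)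
    {α : Type*} {s : Finset α} {U : α → Finset ι} (hU : Set.InjOn U s) (c : α → ℝ) :
    prodMean w ((∑ k ∈ s, c k • character φ (U k)) ^ 2) = ∑ k ∈ s, c k ^ 2 := by
  classical
  calc prodMean w ((∑ k ∈ s, c k • character φ (U k)) ^ 2)
      = ∑ k ∈ s, ∑ l ∈ s, c k * c l * if U k = U l then 1 else 0 := by
        simp only [sq, sum_mul_sum, map_sum, smul_mul_smul_comm, map_smul, smul_eq_mul,
          prodMean_character_mul_character hw hmean hvar]
    _ = ∑ k ∈ s, ∑ l ∈ s, if k = l then c k * c l else 0 :=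
        sum_congr rfl fun k hk => sum_congr rfl fun l hl => by
          simp only [hU.eq_iff hk hl, mul_ite, mul_one, mul_zero]
    _ = ∑ k ∈ s, c k ^ 2 := by
        simp +contextual only [sum_ite_eq, if_true, sq]

lemma add_mul_sq_mul_add_mul_sq_le (t u u' v v' : ℝ) :
    (u + t * u') ^ 2 * (v + t * v') ^ 2 ≤
      u ^ 2 * v ^ 2 + 2 * t * (u * v * (u * v' + u' * v)) +
        4 * t ^ 2 * (u ^ 2 * v' ^ 2 + u' ^ 2 * v ^ 2) + 3 * t ^ 4 * (u' ^ 2 * v' ^ 2) := by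
  linarith [sq_nonneg (t * (u * v') - t ^ 2 * (u' * v')),
    sq_nonneg (t * (u' * v) - t ^ 2 * (u' * v')), sq_nonneg (t * (u * v' - u' * v))]

lemma sum_mul_add_mul_sq_mul_add_mul_sq_le {α : Type*} [Fintype α] {m ζ : α → ℝ}
    (hm : ∀ ω, 0 ≤ m ω) (hsum : ∑ ω, m ω = 1) (hmean : ∑ ω, m ω * ζ ω = 0)
    (hvar : ∑ ω, m ω * ζ ω ^ 2 ≤ 1 / 4) (u u' v v' : ℝ) :
    ∑ ω, m ω * ((u + ζ ω * u') ^ 2 * (v + ζ ω * v') ^ 2) ≤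
      u ^ 2 * v ^ 2 + u ^ 2 * v' ^ 2 + u' ^ 2 * v ^ 2 +
        (1 + 3 * ∑ ω, m ω * ζ ω ^ 4) * (u' ^ 2 * v' ^ 2) := by
  set X := u ^ 2 * v' ^ 2 + u' ^ 2 * v ^ 2
  calc ∑ ω, m ω * ((u + ζ ω * u') ^ 2 * (v + ζ ω * v') ^ 2)
      ≤ ∑ ω, m ω * (u ^ 2 * v ^ 2 + 2 * ζ ω * (u * v * (u * v' + u' * v)) +
          4 * ζ ω ^ 2 * X + 3 * ζ ω ^ 4 * (u' ^ 2 * v' ^ 2)) := by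
        gcongr with ω
        · exact hm ω
        · exact add_mul_sq_mul_add_mul_sq_le (ζ ω) u u' v v'
    _ = (∑ ω, m ω) * (u ^ 2 * v ^ 2) +
          2 * (∑ ω, m ω * ζ ω) * (u * v * (u * v' + u' * v)) +
          4 * (∑ ω, m ω * ζ ω ^ 2) * X + 3 * (∑ ω, m ω * ζ ω ^ 4) * (u' ^ 2 * v' ^ 2) := by
        simp only [mul_sum, sum_mul, ← sum_add_distrib]
        exact sum_congr rfl fun ω _ => by ring
    _ ≤ _ := by
        have hquad : (∑ ω, m ω * ζ ω ^ 2) * X ≤ 1 / 4 * X := by gcongr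
        have hslack : 0 ≤ u' ^ 2 * v' ^ 2 := by positivity
        rw [hsum, hmean]
        linarith

theorem prodMean_multilinear_sq_mul_sq_le (hw : ∀ i ω, 0 ≤ w i ω) (hsum : ∀ i, ∑ ω, w i ω = 1)
    (hmean : ∀ i, ∑ ω, w i ω * φ i ω = 0) (hvar : ∀ i, ∑ ω, w i ω * φ i ω ^ 2 ≤ 1 / 4)
    (A : Finset ι) (a b : Finset ι → ℝ) :
    prodMean w (multilinear φ A a ^ 2 * multilinear φ A b ^ 2) ≤
      weightPairing (fun i => 3 * ∑ ω, w i ω * φ i ω ^ 4) A a b := by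
  induction A using Finset.induction_on generalizing a b with
  | empty =>
    have hconst (c : Finset ι → ℝ) : multilinear φ ∅ c = c ∅ • 1 := by
      ext x
      simp [multilinear, character]
    simp [hconst, weightPairing, upperWeight, filter_singleton, smul_pow, prodMean_one hsum,
      mul_comm]
  | insert i A hi ih =>
    set a' : Finset ι → ℝ := fun S => a (insert i S)
    set b' : Finset ι → ℝ := fun S => b (insert i S)
    set P := multilinear φ A
    set κ : ι → ℝ := fun i => 3 * ∑ ω, w i ω * φ i ω ^ 4
    have hκ : 0 ≤ 1 + κ i := by
      have := sum_nonneg fun ω (_ : ω ∈ univ) => mul_nonneg (hw i ω) (by positivity : 0 ≤ φ i ω ^ 4)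
      positivity
    calc prodMean w (multilinear φ (insert i A) a ^ 2 * multilinear φ (insert i A) b ^ 2)
        = prodMean w fun x => ∑ ω, w i ω *
            ((P a x + φ i ω * P a' x) ^ 2 * (P b x + φ i ω * P b' x) ^ 2) := by
          rw [← prodMean_resample (hsum i)]
          simp only [Pi.mul_apply, Pi.pow_apply, multilinear_insert_update hi]
          rfl
      _ ≤ prodMean w (P a ^ 2 * P b ^ 2 + P a ^ 2 * P b' ^ 2 + P a' ^ 2 * P b ^ 2 +
            (1 + κ i) • (P a' ^ 2 * P b' ^ 2)) :=
          prodMean_mono hw fun x => sum_mul_add_mul_sq_mul_add_mul_sq_le (hw i) (hsum i) (hmean i)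
            (hvar i) (P a x) (P a' x) (P b x) (P b' x)
      _ ≤ weightPairing κ A a b + weightPairing κ A a b' + weightPairing κ A a' b +
            (1 + κ i) * weightPairing κ A a' b' := by
          simp only [map_add, map_smul, smul_eq_mul]
          gcongr <;> apply ih
      _ = weightPairing κ (insert i A) a b := (weightPairing_insert κ hi a b).symm

end ProductSpace

section BiasedCube

/-- The `p`-biased weights on one coordinate. -/
def biasedWeight (p : ℝ) (b : Bool) : ℝ :=
  if b then p else 1 - p

/-- The standardised coordinate `(x - p) / σ` on `{0,1}`, whose products are the characters `χ_S`.
For `p = 0` and `p = 1` it is `0`, since division by zero is. -/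
noncomputable def biasedCoord (p : ℝ) (b : Bool) : ℝ :=
  ((if b then 1 else 0) - p) / Real.sqrt (p * (1 - p))

variable {p : ℝ}

lemma Ep_eq_prodMean (p : ℝ) (F : (Fin n → Bool) → ℝ) :
    Ep p F = prodMean (fun _ => biasedWeight p) F :=
  rfl

lemma sum_biasedWeight (p : ℝ) : ∑ b, biasedWeight p b = 1 := by
  simp [biasedWeight]

lemma biasedWeight_nonneg (hp : 0 ≤ p) (hp' : p ≤ 1) (b : Bool) : 0 ≤ biasedWeight p b := by
  cases b <;> simp [biasedWeight, hp, hp']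

lemma sum_biasedWeight_mul_biasedCoord (p : ℝ) : ∑ b, biasedWeight p b * biasedCoord p b = 0 := by
  simp only [Fintype.sum_bool, biasedWeight, biasedCoord, if_true, Bool.false_eq_true, if_false]
  ring

lemma sum_biasedWeight_mul_biasedCoord_sq (hp : 0 < p) (hp' : p < 1) :
    ∑ b, biasedWeight p b * biasedCoord p b ^ 2 = 1 := by
  have hσ : 0 < p * (1 - p) := mul_pos hp (sub_pos.2 hp')
  have hq : 1 - p ≠ 0 := (sub_pos.2 hp').ne'
  simp only [Fintype.sum_bool, biasedWeight, biasedCoord, div_pow, Real.sq_sqrt hσ.le, if_true,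
    Bool.false_eq_true, if_false]
  field_simp
  ring

lemma sum_biasedWeight_mul_biasedCoord_pow_four (hp : 0 < p) (hp' : p < 1) :
    ∑ b, biasedWeight p b * biasedCoord p b ^ 4 = ((1 - p) ^ 3 + p ^ 3) / (p * (1 - p)) := by
  have hq : 0 < 1 - p := sub_pos.2 hp'
  have hσ : √(p * (1 - p)) ^ 4 = (p * (1 - p)) ^ 2 := by
    rw [show 4 = 2 * 2 from rfl, pow_mul, Real.sq_sqrt (by positivity)]
  simp only [Fintype.sum_bool, biasedWeight, biasedCoord, div_pow, hσ, if_true,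
    Bool.false_eq_true, if_false]
  field_simp
  ring

lemma pnorm_pow_of_even (hp : 0 ≤ p) (hp' : p ≤ 1) {r : ℕ} (hr : Even r) (hr0 : r ≠ 0)
    (F : (Fin n → Bool) → ℝ) : pnorm p r F ^ r = Ep p (F ^ r) := by
  have hmoment : Ep p (fun x => |F x| ^ (r : ℝ)) = Ep p (F ^ r) := by
    simp only [Real.rpow_natCast, hr.pow_abs]
    rfl
  have hnonneg : 0 ≤ Ep p (F ^ r) :=
    calc 0 = prodMean (fun _ : Fin n => biasedWeight p) 0 := (map_zero _).symm
      _ ≤ Ep p (F ^ r) :=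
        prodMean_mono (fun _ => biasedWeight_nonneg hp hp') fun x => hr.pow_nonneg (F x)
  rw [pnorm, hmoment, one_div, Real.rpow_inv_natCast_pow hnonneg hr0]

lemma Ep_derivS_sq (hp : 0 < p) (hp' : p < 1) (S : Finset (Fin n)) (f : (Fin n → Bool) → ℝ) :
    Ep p (derivS p S f ^ 2) = upperWeight univ (coeff p f) S := by
  have hinj : Set.InjOn (· \ S) {T : Finset (Fin n) | S ⊆ T} := fun T hT T' hT' h => by
    rw [← sdiff_union_of_subset hT, ← sdiff_union_of_subset hT', show T \ S = T' \ S from h]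
  have hderiv : derivS p S f =
      ∑ T with S ⊆ T, coeff p f T • character (fun _ => biasedCoord p) (T \ S) := by
    ext x
    simp only [derivS, Finset.sum_apply, Pi.smul_apply, smul_eq_mul]
    rfl
  rw [hderiv, Ep_eq_prodMean, prodMean_sum_character_sq (fun _ => sum_biasedWeight p)
    (fun _ => sum_biasedWeight_mul_biasedCoord p)
    (fun _ => sum_biasedWeight_mul_biasedCoord_sq hp hp') (by simpa using hinj),
    upperWeight, powerset_univ]

lemma pnorm_two_derivS_pow_four (hp : 0 < p) (hp' : p < 1) (S : Finset (Fin n))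
    (f : (Fin n → Bool) → ℝ) :
    pnorm p 2 (derivS p S f) ^ 4 = upperWeight univ (coeff p f) S ^ 2 := by
  have hnorm : pnorm p 2 (derivS p S f) ^ 2 = Ep p (derivS p S f ^ 2) :=
    pnorm_pow_of_even hp.le hp'.le even_two two_ne_zero _
  rw [← Ep_derivS_sq hp hp', ← hnorm, ← pow_mul]

lemma noise_eq_multilinear (p ρ : ℝ) (f : (Fin n → Bool) → ℝ) :
    noise p ρ f = multilinear (fun _ b => ρ * biasedCoord p b) univ (coeff p f) := by
  ext x
  simp only [noise, multilinear, character, prod_mul_distrib, prod_const, powerset_univ,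
    mul_left_comm (coeff p f _), mul_assoc]
  rfl

theorem pnorm_four_noise_pow_four_le {ρ : ℝ} (hp : 0 < p) (hp' : p < 1) (hρ : |ρ| ≤ 1 / 2)
    (f : (Fin n → Bool) → ℝ) :
    pnorm p 4 (noise p ρ f) ^ 4 ≤
      ∑ S : Finset (Fin n), (3 * (((1 - p) ^ 3 + p ^ 3) / (p * (1 - p))) * ρ ^ 4) ^ S.card *
        pnorm p 2 (derivS p S f) ^ 4 := by
  have hmoment (k : ℕ) : ∑ b, biasedWeight p b * (ρ * biasedCoord p b) ^ k =
      ρ ^ k * ∑ b, biasedWeight p b * biasedCoord p b ^ k := by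
    simp only [mul_pow, mul_left_comm _ (ρ ^ k), mul_sum]
  have hmean : ∑ b, biasedWeight p b * (ρ * biasedCoord p b) = 0 := by
    simpa only [pow_one, sum_biasedWeight_mul_biasedCoord, mul_zero] using hmoment 1
  have hvar : ∑ b, biasedWeight p b * (ρ * biasedCoord p b) ^ 2 ≤ 1 / 4 := by
    rw [hmoment, sum_biasedWeight_mul_biasedCoord_sq hp hp', mul_one]
    exact (sq_le_sq' (abs_le.1 hρ).1 (abs_le.1 hρ).2).trans_eq (by norm_num)
  calc pnorm p 4 (noise p ρ f) ^ 4
      = Ep p (noise p ρ f ^ 4) :=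
        pnorm_pow_of_even hp.le hp'.le (by decide) four_ne_zero _
    _ = prodMean (fun _ => biasedWeight p) (noise p ρ f ^ 2 * noise p ρ f ^ 2) := by
        rw [Ep_eq_prodMean, ← pow_add]
    _ ≤ weightPairing (fun _ => 3 * ∑ b, biasedWeight p b * (ρ * biasedCoord p b) ^ 4) univ
          (coeff p f) (coeff p f) := by
        rw [noise_eq_multilinear]
        exact prodMean_multilinear_sq_mul_sq_le (fun _ => biasedWeight_nonneg hp.le hp'.le)
          (fun _ => sum_biasedWeight p) (fun _ => hmean) (fun _ => hvar) _ _ _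
    _ = _ := by
        simp only [weightPairing, powerset_univ, prod_const, hmoment,
          sum_biasedWeight_mul_biasedCoord_pow_four hp hp', pnorm_two_derivS_pow_four hp hp',
          mul_comm (ρ ^ 4), sq, mul_assoc]

theorem sum_pnorm_derivS_le_sum_genInf (hp : 0 < p) (hp' : p < 1) (ρ : ℝ)
    (f : (Fin n → Bool) → ℝ) :
    ∑ S : Finset (Fin n), (3 * (((1 - p) ^ 3 + p ^ 3) / (p * (1 - p))) * ρ ^ 4) ^ S.card *
        pnorm p 2 (derivS p S f) ^ 4 ≤
      ∑ S : Finset (Fin n), (3 * (p * (1 - p)) * ρ ^ 4) ^ S.card * genInf p S f ^ 2 := by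
  have hq : 0 < 1 - p := sub_pos.2 hp'
  have hlam : 3 * (((1 - p) ^ 3 + p ^ 3) / (p * (1 - p))) * ρ ^ 4 ≤
      3 * (p * (1 - p)) * ρ ^ 4 / (p * (1 - p)) ^ 2 := by
    have hcubes : (1 - p) ^ 3 + p ^ 3 ≤ 1 := by nlinarith
    calc 3 * (((1 - p) ^ 3 + p ^ 3) / (p * (1 - p))) * ρ ^ 4
        ≤ 3 * (1 / (p * (1 - p))) * ρ ^ 4 := by gcongr
      _ = 3 * (p * (1 - p)) * ρ ^ 4 / (p * (1 - p)) ^ 2 := by field_simp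
  refine sum_le_sum fun S _ => ?_
  calc (3 * (((1 - p) ^ 3 + p ^ 3) / (p * (1 - p))) * ρ ^ 4) ^ S.card *
        pnorm p 2 (derivS p S f) ^ 4
      ≤ (3 * (p * (1 - p)) * ρ ^ 4 / (p * (1 - p)) ^ 2) ^ S.card *
          upperWeight univ (coeff p f) S ^ 2 := by
        rw [pnorm_two_derivS_pow_four hp hp']
        gcongr
    _ = (3 * (p * (1 - p)) * ρ ^ 4) ^ S.card * genInf p S f ^ 2 := by
        rw [genInf, upperWeight, powerset_univ, div_pow, div_pow, pow_right_comm]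
        ring

end BiasedCube

lemma one_div_sqrt_twelve_le_half : 1 / √12 ≤ 1 / 2 :=
  one_div_le_one_div_of_le two_pos (Real.le_sqrt_of_sq_le (by norm_num))

theorem statement1_general {n : ℕ} (p ρ : ℝ) (hp : 0 < p) (hp' : p < 1) (hρ : |ρ| ≤ 1 / 2)
    (lam : ℝ) (hlam : lam = ((1 - p) ^ 3 + p ^ 3) / (p * (1 - p)))
    (f : (Fin n → Bool) → ℝ) :
    pnorm p 4 (noise p ρ f) ^ 4 ≤
      (∑ S : Finset (Fin n), (3 * lam * ρ ^ 4) ^ S.card * pnorm p 2 (derivS p S f) ^ 4) ∧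
    (∑ S : Finset (Fin n), (3 * lam * ρ ^ 4) ^ S.card * pnorm p 2 (derivS p S f) ^ 4) ≤
      ∑ S : Finset (Fin n), (3 * (p * (1 - p)) * ρ ^ 4) ^ S.card * genInf p S f ^ 2 := by
  subst hlam
  exact ⟨pnorm_four_noise_pow_four_le hp hp' hρ f, sum_pnorm_derivS_le_sum_genInf hp hp' ρ f⟩

/-- the key hypercontractive estimate in terms of derivatives and
generalised influences. -/
theorem statement1 {n : ℕ} (p ρ : ℝ) (hp : 0 < p) (hp' : p ≤ 1/2)
    (hρ : 0 < ρ) (hρ' : ρ ≤ 1 / Real.sqrt 12)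
    (lam : ℝ) (hlam : lam = ((1 - p) ^ 3 + p ^ 3) / (p * (1 - p)))
    (f : (Fin n → Bool) → ℝ) :
    pnorm p 4 (noise p ρ f) ^ 4 ≤
      (∑ S : Finset (Fin n), (3 * lam * ρ ^ 4) ^ S.card * pnorm p 2 (derivS p S f) ^ 4) ∧
    (∑ S : Finset (Fin n), (3 * lam * ρ ^ 4) ^ S.card * pnorm p 2 (derivS p S f) ^ 4) ≤
      ∑ S : Finset (Fin n), (3 * (p * (1 - p)) * ρ ^ 4) ^ S.card * genInf p S f ^ 2 :=
  statement1_general p ρ hp (by linarith)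
    ((abs_of_pos hρ).trans_le (hρ'.trans one_div_sqrt_twelve_le_half)) lam hlam f

end GlobalHC
end
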